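/- (Gaussian hypercontractivity) For any polynomial q: ℝ^d → ℝ of degree k and any integer p ≥ 2, the L^p norm of q with respect to the standard Gaussian measure is bounded by (p-1)^k times its L^2 norm: ‖q‖_{L^p(γ_d)} ≤ (p-1)^k ‖q‖_{L^2(γ_d)}. -/

import Mathlib

open MeasureTheory ProbabilityTheory

/-!
The proof runs the Ornstein-Uhlenbeck semigroup, for even exponents `2 (n + 1)` and by induction
on the degree `k`, to get the sharper bound `E[q ^ (2 (n + 1))] ^ θ ≤ (2 n + 1) ^ k E[q ^ 2]` with
`θ = 1 / (n + 1)`.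

Decompose `q = ∑ f_j` into eigenvectors of the number operator `N`, with eigenvalues `j ≤ k`, and
let `g_ρ = ∑ ρ ^ j f_j`, which joins the constant `f_0` to `q`. Gaussian integration by parts gives
`ρ d/dρ E[g_ρ ^ (m + 2)] = (m + 2) (m + 1) ∑ᵢ E[g_ρ ^ m (∂ᵢ g_ρ) ^ 2]`. For `m = 2 n`, Hölder's
inequality and the induction hypothesis for the polynomials `∂ᵢ g_ρ`, of degree `k - 1`, bound the
right-hand side by the same expression for `m = 0`, and integrating the resulting differential
inequality `θ F' ≤ F ^ (1 - θ) G'` from `ρ = 0` to `ρ = 1` gives the bound.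

A general `p` is compared with the least even exponent `2 (n + 1) ≥ p`, for which
`2 n + 1 ≤ (p - 1) ^ 2`.
-/

section

open MvPolynomial

theorem hasDerivAt_linearMap_eval {𝕜 A : Type*} [NontriviallyNormedField 𝕜] [CommSemiring A]
    [Algebra 𝕜 A] (L : A →ₗ[𝕜] 𝕜) (P : Polynomial A) (ρ : 𝕜) :
    HasDerivAt (fun t ↦ L (P.eval (algebraMap 𝕜 A t)))
      (L (P.derivative.eval (algebraMap 𝕜 A ρ))) ρ := by
  induction P using Polynomial.induction_on' with
  | add P Q hP hQ =>
    simpa only [Polynomial.derivative_add, Polynomial.eval_add, map_add] using hP.fun_add hQ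
  | monomial n a =>
    have h (c : A) (t : 𝕜) (j : ℕ) : L (c * algebraMap 𝕜 A t ^ j) = L c * t ^ j := by
      rw [← map_pow, mul_comm, ← Algebra.smul_def, map_smul, smul_eq_mul, mul_comm]
    have hn : L (a * n) = L a * n := by
      rw [mul_comm, ← nsmul_eq_mul, map_nsmul, nsmul_eq_mul, mul_comm]
    simpa only [Polynomial.derivative_monomial, Polynomial.eval_monomial, h, hn]
      using ((hasDerivAt_pow n ρ).const_mul (L a)).congr_deriv (mul_assoc _ _ _).symm

theorem rpow_sub_rpow_le_of_deriv_le_of_pos {F G F' G' : ℝ → ℝ} {a b θ : ℝ} (hab : a ≤ b)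
    (hF : ContinuousOn F (Set.Icc a b)) (hG : ContinuousOn G (Set.Icc a b))
    (hF' : ∀ x ∈ Set.Ioo a b, HasDerivAt F (F' x) x)
    (hG' : ∀ x ∈ Set.Ioo a b, HasDerivAt G (G' x) x) (hF0 : ∀ x ∈ Set.Icc a b, 0 < F x)
    (hFG : ∀ x ∈ Set.Ioo a b, θ * F' x ≤ F x ^ (1 - θ) * G' x) :
    F b ^ θ - F a ^ θ ≤ G b - G a := by
  have hderiv : ∀ x ∈ Set.Ioo a b,
      HasDerivAt (fun y ↦ G y - F y ^ θ) (G' x - F' x * θ * F x ^ (θ - 1)) x := fun x hx ↦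
    (hG' x hx).sub ((hF' x hx).rpow_const (Or.inl (hF0 x (Set.Ioo_subset_Icc_self hx)).ne'))
  have hnonneg : ∀ x ∈ Set.Ioo a b, 0 ≤ G' x - F' x * θ * F x ^ (θ - 1) := by
    intro x hx
    have hFx := hF0 x (Set.Ioo_subset_Icc_self hx)
    refine sub_nonneg.mpr ?_
    calc F' x * θ * F x ^ (θ - 1) = θ * F' x * F x ^ (θ - 1) := by rw [mul_comm (F' x)]
      _ ≤ F x ^ (1 - θ) * G' x * F x ^ (θ - 1) :=
        mul_le_mul_of_nonneg_right (hFG x hx) (Real.rpow_nonneg hFx.le _)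
      _ = G' x := by
        rw [mul_right_comm, ← Real.rpow_add hFx, sub_add_sub_cancel, sub_self, Real.rpow_zero,
          one_mul]
  rw [← interior_Icc] at hderiv hnonneg
  have hmono : MonotoneOn (fun x ↦ G x - F x ^ θ) (Set.Icc a b) :=
    monotoneOn_of_hasDerivWithinAt_nonneg (convex_Icc a b)
      (hG.sub (hF.rpow_const fun x hx ↦ Or.inl (hF0 x hx).ne'))
      (fun x hx ↦ (hderiv x hx).hasDerivWithinAt) hnonneg
  linarith [hmono (Set.left_mem_Icc.mpr hab) (Set.right_mem_Icc.mpr hab) hab]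

theorem rpow_sub_rpow_le_of_deriv_le {F G F' G' : ℝ → ℝ} {a b θ : ℝ} (hab : a ≤ b)
    (hθ : 0 ≤ θ) (hθ1 : θ ≤ 1) (hF : ContinuousOn F (Set.Icc a b))
    (hG : ContinuousOn G (Set.Icc a b)) (hF' : ∀ x ∈ Set.Ioo a b, HasDerivAt F (F' x) x)
    (hG' : ∀ x ∈ Set.Ioo a b, HasDerivAt G (G' x) x) (hF0 : ∀ x ∈ Set.Icc a b, 0 ≤ F x)
    (hG0 : ∀ x ∈ Set.Ioo a b, 0 ≤ G' x)
    (hFG : ∀ x ∈ Set.Ioo a b, θ * F' x ≤ F x ^ (1 - θ) * G' x) :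
    F b ^ θ - F a ^ θ ≤ G b - G a := by
  -- `F ^ θ` need not be differentiable where `F` vanishes, hence the shift by `ε`.
  have hshift {ε : ℝ} (hε : 0 < ε) : (F b + ε) ^ θ - (F a + ε) ^ θ ≤ G b - G a := by
    refine rpow_sub_rpow_le_of_deriv_le_of_pos hab (hF.add continuousOn_const) hG
      (fun x hx ↦ (hF' x hx).add_const ε) hG'
      (fun x hx ↦ add_pos_of_nonneg_of_pos (hF0 x hx) hε) fun x hx ↦ ?_
    have hFx := hF0 x (Set.Ioo_subset_Icc_self hx)
    calc θ * F' x ≤ F x ^ (1 - θ) * G' x := hFG x hx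
      _ ≤ (F x + ε) ^ (1 - θ) * G' x := by
        have := hG0 x hx
        gcongr
        linarith
  have hcont : Continuous fun ε ↦ (F b + ε) ^ θ - (F a + ε) ^ θ :=
    ((continuous_const.add continuous_id).rpow_const fun _ ↦ Or.inr hθ).sub
      ((continuous_const.add continuous_id).rpow_const fun _ ↦ Or.inr hθ)
  have hlim := (hcont.tendsto 0).mono_left (nhdsWithin_le_nhds (s := Set.Ioi 0))
  simp only [add_zero] at hlim
  exact le_of_tendsto hlim (eventually_mem_nhdsWithin.mono fun _ ↦ hshift)

theorem integral_rpow_mul_rpow_le {α : Type*} {_ : MeasurableSpace α} {μ : Measure α} {f g : α → ℝ}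
    (hf : Integrable f μ) (hg : Integrable g μ) (hf0 : 0 ≤ f) (hg0 : 0 ≤ g) {a b : ℝ}
    (ha : 0 ≤ a) (hb : 0 ≤ b) (hab : a + b = 1) :
    ∫ x, f x ^ a * g x ^ b ∂μ ≤ (∫ x, f x ∂μ) ^ a * (∫ x, g x ∂μ) ^ b := by
  have hmeas : AEStronglyMeasurable (fun x ↦ f x ^ a * g x ^ b) μ :=
    ((hf.aemeasurable.pow_const a).mul (hg.aemeasurable.pow_const b)).aestronglyMeasurable
  have hfg0 : 0 ≤ fun x ↦ f x ^ a * g x ^ b := fun x ↦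
    mul_nonneg (Real.rpow_nonneg (hf0 x) a) (Real.rpow_nonneg (hg0 x) b)
  have hI := integral_nonneg (μ := μ) hf0
  have hJ := integral_nonneg (μ := μ) hg0
  rw [integral_eq_lintegral_of_nonneg_ae (.of_forall hfg0) hmeas]
  refine ENNReal.toReal_le_of_le_ofReal (by positivity) ?_
  calc ∫⁻ x, ENNReal.ofReal (f x ^ a * g x ^ b) ∂μ
      = ∫⁻ x, ENNReal.ofReal (f x) ^ a * ENNReal.ofReal (g x) ^ b ∂μ := by
        refine lintegral_congr fun x ↦ ?_
        rw [ENNReal.ofReal_mul (Real.rpow_nonneg (hf0 x) a),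
          ENNReal.ofReal_rpow_of_nonneg (hf0 x) ha, ENNReal.ofReal_rpow_of_nonneg (hg0 x) hb]
    _ ≤ (∫⁻ x, ENNReal.ofReal (f x) ∂μ) ^ a * (∫⁻ x, ENNReal.ofReal (g x) ∂μ) ^ b :=
        ENNReal.lintegral_mul_norm_pow_le hf.aemeasurable.ennreal_ofReal
          hg.aemeasurable.ennreal_ofReal ha hb hab
    _ = ENNReal.ofReal ((∫ x, f x ∂μ) ^ a * (∫ x, g x ∂μ) ^ b) := by
        rw [← ofReal_integral_eq_lintegral_ofReal hf (.of_forall hf0),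
          ← ofReal_integral_eq_lintegral_ofReal hg (.of_forall hg0),
          ENNReal.ofReal_mul (by positivity), ENNReal.ofReal_rpow_of_nonneg hI ha,
          ENNReal.ofReal_rpow_of_nonneg hJ hb]

theorem rpow_integral_norm_pow_le_of_le {α E : Type*} {_ : MeasurableSpace α} {μ : Measure α}
    [IsProbabilityMeasure μ] [NormedAddCommGroup E] {f : α → E} {p r : ℕ} (hp : p ≠ 0)
    (hpr : p ≤ r) (hf : MemLp f r μ) :
    (∫ x, ‖f x‖ ^ p ∂μ) ^ (p : ℝ)⁻¹ ≤ (∫ x, ‖f x‖ ^ r ∂μ) ^ (r : ℝ)⁻¹ := by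
  have hlpNorm {s : ℕ} (hs : s ≠ 0) :
      lpNorm f s μ = (∫ x, ‖f x‖ ^ s ∂μ) ^ (s : ℝ)⁻¹ := by
    simpa only [ENNReal.toReal_natCast, Real.rpow_natCast] using
      lpNorm_eq_integral_norm_rpow_toReal (p := s) (mod_cast hs) (ENNReal.natCast_ne_top s)
        hf.aestronglyMeasurable
  rw [← hlpNorm hp, ← hlpNorm (by omega), ← toReal_eLpNorm hf.aestronglyMeasurable,
    ← toReal_eLpNorm hf.aestronglyMeasurable]
  exact ENNReal.toReal_mono hf.eLpNorm_ne_top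
    (eLpNorm_le_eLpNorm_of_exponent_le (mod_cast hpr) hf.aestronglyMeasurable)

theorem hasDerivAt_gaussianPDFReal (μ : ℝ) (v : NNReal) (x : ℝ) :
    HasDerivAt (gaussianPDFReal μ v) (-((x - μ) / v) * gaussianPDFReal μ v x) x := by
  have hexp : HasDerivAt (fun y : ℝ ↦ -(y - μ) ^ 2 / (2 * v)) (-((x - μ) / v)) x := by
    refine (((((hasDerivAt_id x).sub_const μ).pow 2).neg).div_const (2 * (v : ℝ))).congr_deriv ?_
    simp only [id_eq]
    rw [← neg_div, ← mul_div_mul_left (-(x - μ)) (v : ℝ) two_ne_zero]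
    congr 1
    ring
  rw [gaussianPDFReal_def]
  exact (hexp.exp.const_mul _).congr_deriv (by ring)

theorem integrable_gaussianReal_iff {μ : ℝ} {v : NNReal} (hv : v ≠ 0) {f : ℝ → ℝ} :
    Integrable f (gaussianReal μ v) ↔ Integrable fun x ↦ gaussianPDFReal μ v x * f x := by
  rw [gaussianReal_of_var_ne_zero μ hv, integrable_withDensity_iff_integrable_smul'
    (measurable_gaussianPDF μ v) (.of_forall fun _ ↦ gaussianPDF_lt_top)]
  simp only [toReal_gaussianPDF, smul_eq_mul]

theorem integral_sub_mul_gaussianReal {μ : ℝ} {v : NNReal} {f f' : ℝ → ℝ}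
    (hderiv : ∀ x, HasDerivAt f (f' x) x) (hf : Integrable f (gaussianReal μ v))
    (hf' : Integrable f' (gaussianReal μ v))
    (hxf : Integrable (fun x ↦ (x - μ) * f x) (gaussianReal μ v)) :
    ∫ x, (x - μ) * f x ∂gaussianReal μ v = v * ∫ x, f' x ∂gaussianReal μ v := by
  rcases eq_or_ne v 0 with rfl | hv
  · simp
  have hv' : (v : ℝ) ≠ 0 := NNReal.coe_ne_zero.mpr hv
  have hprod (x : ℝ) : HasDerivAt (fun y ↦ gaussianPDFReal μ v y * f y)
      (gaussianPDFReal μ v x * (f' x - (v : ℝ)⁻¹ * ((x - μ) * f x))) x :=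
    ((hasDerivAt_gaussianPDFReal μ v x).fun_mul (hderiv x)).congr_deriv (by ring)
  have hint : Integrable (fun x ↦ f' x - (v : ℝ)⁻¹ * ((x - μ) * f x)) (gaussianReal μ v) :=
    hf'.sub (hxf.const_mul _)
  have hzero : ∫ x, f' x - (v : ℝ)⁻¹ * ((x - μ) * f x) ∂gaussianReal μ v = 0 := by
    rw [integral_gaussianReal_eq_integral_smul hv]
    exact integral_eq_zero_of_hasDerivAt_of_integrable hprod
      ((integrable_gaussianReal_iff hv).mp hint) ((integrable_gaussianReal_iff hv).mp hf)
  rw [integral_sub hf' (hxf.const_mul _), integral_const_mul, sub_eq_zero] at hzero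
  rw [hzero, mul_inv_cancel_left₀ hv']

theorem integrable_pow_gaussianReal (μ : ℝ) (v : NNReal) (n : ℕ) :
    Integrable (fun x ↦ x ^ n) (gaussianReal μ v) :=
  (memLp_id_gaussianReal (n : NNReal)).integrable_norm_pow'.mono' (by fun_prop) (by simp)

theorem integral_pow_succ_gaussianReal (v : NNReal) (n : ℕ) :
    ∫ x, x ^ (n + 1) ∂gaussianReal 0 v = v * (n * ∫ x, x ^ (n - 1) ∂gaussianReal 0 v) := by
  have h := integral_sub_mul_gaussianReal (μ := 0) (v := v) (hasDerivAt_pow n)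
    (integrable_pow_gaussianReal 0 v n) ((integrable_pow_gaussianReal 0 v (n - 1)).const_mul _)
    (by simpa only [sub_zero, ← pow_succ'] using integrable_pow_gaussianReal 0 v (n + 1))
  simpa only [sub_zero, ← pow_succ', integral_const_mul] using h

theorem totalDegree_pderiv_le {σ R : Type*} [CommSemiring R] (i : σ) (q : MvPolynomial σ R) :
    (pderiv i q).totalDegree ≤ q.totalDegree - 1 := by
  classical
  refine Finset.sup_le fun s hs ↦ Nat.le_sub_of_add_le ?_
  have hcoeff : q.coeff (s + Finsupp.single i 1) ≠ 0 := fun h ↦ by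
    simp [coeff_pderiv, h] at hs
  calc (s.sum fun _ e ↦ e) + 1 = (s + Finsupp.single i 1).sum fun _ e ↦ e := by
        rw [Finsupp.sum_add_index' (fun _ ↦ rfl) fun _ _ _ ↦ rfl, Finsupp.sum_single_index rfl]
    _ ≤ q.totalDegree := le_totalDegree (mem_support_iff.mpr hcoeff)

/-- The standard Gaussian measure on `ι → ℝ`. -/
noncomputable abbrev piStdGaussian (ι : Type*) [Fintype ι] : Measure (ι → ℝ) :=
  Measure.pi fun _ ↦ gaussianReal 0 1

variable {ι : Type*} [Fintype ι]

theorem integrable_eval_piStdGaussian (q : MvPolynomial ι ℝ) :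
    Integrable (fun z ↦ eval z q) (piStdGaussian ι) := by
  simp only [eval_eq']
  exact integrable_finsetSum _ fun s _ ↦ (Integrable.fintype_prod (f := fun i x ↦ x ^ s i)
    fun i ↦ integrable_pow_gaussianReal 0 1 (s i)).const_mul _

theorem memLp_eval_piStdGaussian (q : MvPolynomial ι ℝ) (n : ℕ) :
    MemLp (fun z ↦ eval z q) n (piStdGaussian ι) := by
  have hmeas := (integrable_eval_piStdGaussian q).aestronglyMeasurable
  rcases eq_or_ne n 0 with rfl | hn
  · simpa only [Nat.cast_zero] using memLp_zero_iff_aestronglyMeasurable.mpr hmeas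
  refine (integrable_norm_rpow_iff hmeas (mod_cast hn) (ENNReal.natCast_ne_top n)).mp ?_
  simpa only [ENNReal.toReal_natCast, Real.rpow_natCast, map_pow, norm_pow] using
    (integrable_eval_piStdGaussian (q ^ n)).norm

variable (ι) in
/-- The expectation `q ↦ E[q(Z)]`, for `Z` a standard Gaussian vector, as a linear functional on
polynomials. -/
noncomputable def gaussianExpectation : MvPolynomial ι ℝ →ₗ[ℝ] ℝ where
  toFun q := ∫ z, eval z q ∂piStdGaussian ι
  map_add' p q := by
    simpa only [map_add] using
      integral_add (integrable_eval_piStdGaussian p) (integrable_eval_piStdGaussian q)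
  map_smul' c q := by
    simp only [smul_eval, integral_const_mul, smul_eq_mul, RingHom.id_apply]

theorem gaussianExpectation_apply (q : MvPolynomial ι ℝ) :
    gaussianExpectation ι q = ∫ z, eval z q ∂piStdGaussian ι := rfl

theorem gaussianExpectation_C (c : ℝ) : gaussianExpectation ι (C c) = c := by
  simp [gaussianExpectation_apply]

theorem gaussianExpectation_monomial (s : ι →₀ ℕ) (c : ℝ) :
    gaussianExpectation ι (monomial s c) = c * ∏ i, ∫ x, x ^ s i ∂gaussianReal 0 1 := by
  simp only [gaussianExpectation_apply, eval_monomial, Finsupp.prod_pow, integral_const_mul]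
  rw [integral_fintype_prod_eq_prod fun i x ↦ x ^ s i]

theorem gaussianExpectation_X_mul (i : ι) (q : MvPolynomial ι ℝ) :
    gaussianExpectation ι (X i * q) = gaussianExpectation ι (pderiv i q) := by
  classical
  induction q using MvPolynomial.induction_on' with
  | add p q hp hq => simp only [mul_add, map_add, hp, hq]
  | monomial s c =>
    have hrest (t : ι →₀ ℕ) (ht : ∀ j ≠ i, t j = s j) :
        ∏ j ∈ Finset.univ.erase i, ∫ x, x ^ t j ∂gaussianReal 0 1 =
          ∏ j ∈ Finset.univ.erase i, ∫ x, x ^ s j ∂gaussianReal 0 1 :=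
      Finset.prod_congr rfl fun j hj ↦ by rw [ht j (Finset.ne_of_mem_erase hj)]
    rw [X, monomial_mul, pderiv_monomial, gaussianExpectation_monomial,
      gaussianExpectation_monomial, ← Finset.mul_prod_erase _ _ (Finset.mem_univ i),
      ← Finset.mul_prod_erase _ _ (Finset.mem_univ i),
      hrest (Finsupp.single i 1 + s) fun j hj ↦ by simp [Finsupp.single_eq_of_ne hj],
      hrest (s - Finsupp.single i 1) fun j hj ↦ by simp [Finsupp.single_eq_of_ne hj]]
    simp only [Finsupp.add_apply, Finsupp.tsub_apply, Finsupp.single_eq_same, add_comm 1,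
      integral_pow_succ_gaussianReal, NNReal.coe_one]
    ring

variable (ι) in
/-- The number operator `N = ∑ᵢ (Xᵢ ∂ᵢ - ∂ᵢ²)` on polynomials, the negative of the generator of the
Ornstein-Uhlenbeck semigroup. -/
noncomputable def numberOperator : Module.End ℝ (MvPolynomial ι ℝ) :=
  ∑ i, (LinearMap.mulLeft ℝ (X i) ∘ₗ (pderiv i).toLinearMap -
    (pderiv i).toLinearMap ∘ₗ (pderiv i).toLinearMap)

theorem numberOperator_apply (q : MvPolynomial ι ℝ) :
    numberOperator ι q = ∑ i, (X i * pderiv i q - pderiv i (pderiv i q)) := by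
  simp [numberOperator]

theorem gaussianExpectation_mul_numberOperator (r q : MvPolynomial ι ℝ) :
    gaussianExpectation ι (r * numberOperator ι q) =
      ∑ i, gaussianExpectation ι (pderiv i r * pderiv i q) := by
  simp only [numberOperator_apply, Finset.mul_sum, map_sum]
  refine Finset.sum_congr rfl fun i _ ↦ ?_
  rw [mul_sub, mul_left_comm, map_sub, gaussianExpectation_X_mul, pderiv_mul, map_add,
    add_sub_cancel_right]

theorem gaussianExpectation_pow_mul_numberOperator (n : ℕ) (q : MvPolynomial ι ℝ) :
    gaussianExpectation ι (q ^ (n + 1) * numberOperator ι q) =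
      (n + 1) * ∑ i, gaussianExpectation ι (q ^ n * pderiv i q ^ 2) := by
  rw [gaussianExpectation_mul_numberOperator, Finset.mul_sum]
  refine Finset.sum_congr rfl fun i _ ↦ ?_
  have hderiv : pderiv i (q ^ (n + 1)) * pderiv i q = (n + 1) • (q ^ n * pderiv i q ^ 2) := by
    rw [pderiv_pow, Nat.add_sub_cancel, nsmul_eq_mul]
    ring
  rw [hderiv, map_nsmul, nsmul_eq_mul, Nat.cast_succ]

theorem totalDegree_natCast_smul_sub_numberOperator_le {k : ℕ} {q : MvPolynomial ι ℝ}
    (hq : q.totalDegree ≤ k + 1) :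
    (((k + 1 : ℕ) : ℝ) • q - numberOperator ι q).totalDegree ≤ k := by
  have heuler : ((k + 1 : ℕ) : ℝ) • q - ∑ i, X i * pderiv i q =
      ∑ j ∈ Finset.range (q.totalDegree + 1), ((k + 1 : ℕ) - j : ℝ) • homogeneousComponent j q := by
    have hcomp (j : ℕ) : ∑ i, X i * pderiv i (homogeneousComponent j q) =
        (j : ℝ) • homogeneousComponent j q := by
      rw [(homogeneousComponent_isHomogeneous j q).sum_X_mul_pderiv, Nat.cast_smul_eq_nsmul]
    simp only [sub_smul, Finset.sum_sub_distrib, ← Finset.smul_sum, sum_homogeneousComponent,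
      ← hcomp]
    rw [Finset.sum_comm]
    simp only [← Finset.mul_sum, ← map_sum, sum_homogeneousComponent]
  have heuler_le : (((k + 1 : ℕ) : ℝ) • q - ∑ i, X i * pderiv i q).totalDegree ≤ k := by
    rw [heuler]
    refine totalDegree_finsetSum_le fun j hj ↦ ?_
    rcases eq_or_ne j (k + 1) with rfl | hj'
    · simp only [sub_self, zero_smul, totalDegree_zero, zero_le]
    · have := Finset.mem_range.mp hj
      exact (totalDegree_smul_le _ _).trans
        ((homogeneousComponent_isHomogeneous j q).totalDegree_le.trans (by omega))
  have hpderiv2 (i : ι) : (pderiv i (pderiv i q)).totalDegree ≤ k := by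
    have := totalDegree_pderiv_le i q
    have := totalDegree_pderiv_le i (pderiv i q)
    omega
  rw [numberOperator_apply, Finset.sum_sub_distrib, ← sub_add]
  exact (totalDegree_add _ _).trans
    (max_le heuler_le (totalDegree_finsetSum_le fun i _ ↦ hpderiv2 i))

variable (ι) in
/-- The polynomials of the `j`-th Wiener chaos: the eigenvectors of the number operator with
eigenvalue `j`. The bound `j` on their degree is automatic, but it is cheaper to build it into the
definition than to derive it. -/
noncomputable def wienerChaos (j : ℕ) : Submodule ℝ (MvPolynomial ι ℝ) :=
  (numberOperator ι).eigenspace j ⊓ restrictTotalDegree ι ℝ j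

theorem mem_wienerChaos {j : ℕ} {f : MvPolynomial ι ℝ} :
    f ∈ wienerChaos ι j ↔ numberOperator ι f = (j : ℝ) • f ∧ f.totalDegree ≤ j := by
  rw [wienerChaos, Submodule.mem_inf, Module.End.mem_eigenspace_iff, mem_restrictTotalDegree]

theorem exists_sum_wienerChaos_eq {k : ℕ} {q : MvPolynomial ι ℝ} (hq : q.totalDegree ≤ k) :
    ∃ f : ℕ → MvPolynomial ι ℝ,
      (∀ j, f j ∈ wienerChaos ι j) ∧ ∑ j ∈ Finset.range (k + 1), f j = q := by
  induction k generalizing q with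
  | zero =>
    refine ⟨Pi.single 0 q, fun j ↦ ?_, by simp⟩
    rcases eq_or_ne j 0 with rfl | hj
    · obtain ⟨c, rfl⟩ : ∃ c, q = C c := ⟨_, totalDegree_eq_zero_iff_eq_C.mp (by omega)⟩
      simp [mem_wienerChaos, numberOperator_apply]
    · simp [hj]
  | succ k ih =>
    obtain ⟨r, hr, hsum⟩ := ih (totalDegree_natCast_smul_sub_numberOperator_le hq)
    -- `k + 1 - N` acts on the `j`-th chaos as multiplication by `k + 1 - j`.
    set g : ℕ → MvPolynomial ι ℝ := fun j ↦ ((k + 1 : ℕ) - j : ℝ)⁻¹ • r j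
    have hg (j : ℕ) : g j ∈ wienerChaos ι j := Submodule.smul_mem _ _ (hr j)
    have hgr : ∀ j ∈ Finset.range (k + 1),
        ((k + 1 : ℕ) : ℝ) • g j - numberOperator ι (g j) = r j := by
      intro j hj
      have hne : ((k + 1 : ℕ) - j : ℝ) ≠ 0 :=
        sub_ne_zero.mpr (Nat.cast_injective.ne (Finset.mem_range.mp hj).ne')
      rw [(mem_wienerChaos.mp (hg j)).1, ← sub_smul, smul_inv_smul₀ hne]
    set top := q - ∑ j ∈ Finset.range (k + 1), g j
    have htop : top ∈ wienerChaos ι (k + 1) := by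
      refine mem_wienerChaos.mpr ⟨?_, ?_⟩
      · rw [eq_comm, ← sub_eq_zero]
        simp only [top, smul_sub, map_sub, map_sum, Finset.smul_sum]
        rw [sub_sub_sub_comm, ← Finset.sum_sub_distrib, Finset.sum_congr rfl hgr, hsum, sub_self]
      · refine (totalDegree_sub _ _).trans (max_le hq (totalDegree_finsetSum_le fun j hj ↦ ?_))
        exact (mem_wienerChaos.mp (hg j)).2.trans (Finset.mem_range.mp hj).le
    refine ⟨Function.update g (k + 1) top, fun j ↦ ?_, ?_⟩
    · rcases eq_or_ne j (k + 1) with rfl | hj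
      · rwa [Function.update_self]
      · rw [Function.update_of_ne hj]
        exact hg j
    · rw [Finset.sum_range_succ, Function.update_self,
        Finset.sum_congr rfl fun j hj ↦ Function.update_of_ne (Finset.mem_range.mp hj).ne _ _,
        add_sub_cancel]

/-- The path `ρ ↦ ∑ j ≤ k, ρ ^ j • f j`. For `f j` in the `j`-th Wiener chaos it is the orbit of
`∑ j ≤ k, f j` under the Ornstein-Uhlenbeck semigroup, at time `-log ρ`. -/
noncomputable def mehlerPath {σ : Type*} (f : ℕ → MvPolynomial σ ℝ) (k : ℕ) (ρ : ℝ) :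
    MvPolynomial σ ℝ :=
  ∑ j ∈ Finset.range (k + 1), ρ ^ j • f j

theorem mehlerPath_eq_eval {σ : Type*} (f : ℕ → MvPolynomial σ ℝ) (k : ℕ) (ρ : ℝ) :
    mehlerPath f k ρ =
      (∑ j ∈ Finset.range (k + 1), Polynomial.monomial j (f j)).eval (C ρ) := by
  simp only [mehlerPath, Polynomial.eval_finsetSum, Polynomial.eval_monomial, smul_eq_C_mul,
    map_pow, mul_comm]

theorem mehlerPath_zero_right {σ : Type*} (f : ℕ → MvPolynomial σ ℝ) (k : ℕ) :
    mehlerPath f k 0 = f 0 := by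
  simp [mehlerPath, Finset.sum_range_succ']

theorem mehlerPath_one_right {σ : Type*} (f : ℕ → MvPolynomial σ ℝ) (k : ℕ) :
    mehlerPath f k 1 = ∑ j ∈ Finset.range (k + 1), f j := by
  simp only [mehlerPath, one_pow, one_smul]

theorem totalDegree_mehlerPath_le {f : ℕ → MvPolynomial ι ℝ}
    (hf : ∀ j, f j ∈ wienerChaos ι j) (k : ℕ) (ρ : ℝ) : (mehlerPath f k ρ).totalDegree ≤ k :=
  totalDegree_finsetSum_le fun j hj ↦ (totalDegree_smul_le _ _).trans <|
    (mem_wienerChaos.mp (hf j)).2.trans (Finset.mem_range_succ_iff.mp hj)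

theorem numberOperator_mehlerPath {f : ℕ → MvPolynomial ι ℝ}
    (hf : ∀ j, f j ∈ wienerChaos ι j) (k : ℕ) (ρ : ℝ) :
    numberOperator ι (mehlerPath f k ρ) = ρ •
      (∑ j ∈ Finset.range (k + 1), Polynomial.monomial j (f j)).derivative.eval (C ρ) := by
  simp only [mehlerPath, map_sum, map_smul, (mem_wienerChaos.mp (hf _)).1,
    Polynomial.derivative_monomial, Polynomial.eval_finsetSum, Polynomial.eval_monomial,
    Finset.smul_sum]
  refine Finset.sum_congr rfl fun j _ ↦ ?_
  rcases j with _ | j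
  · simp
  · simp only [smul_eq_C_mul, map_pow, map_natCast, Nat.add_sub_cancel]
    ring

theorem hasDerivAt_gaussianExpectation_eval_pow (P : Polynomial (MvPolynomial ι ℝ)) (n : ℕ)
    (ρ : ℝ) :
    HasDerivAt (fun t ↦ gaussianExpectation ι (P.eval (C t) ^ n))
      (n * gaussianExpectation ι (P.eval (C ρ) ^ (n - 1) * P.derivative.eval (C ρ))) ρ := by
  have hderiv : (P ^ n).derivative.eval (C ρ) =
      n • (P.eval (C ρ) ^ (n - 1) * P.derivative.eval (C ρ)) := by
    simp [Polynomial.derivative_pow, mul_assoc]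
  have h := hasDerivAt_linearMap_eval (gaussianExpectation ι) (P ^ n) ρ
  rw [algebraMap_eq, hderiv, map_nsmul, nsmul_eq_mul] at h
  simpa only [Polynomial.eval_pow] using h

theorem continuous_gaussianExpectation_mehlerPath_pow (f : ℕ → MvPolynomial ι ℝ) (k n : ℕ) :
    Continuous fun ρ ↦ gaussianExpectation ι (mehlerPath f k ρ ^ n) := by
  simp only [mehlerPath_eq_eval]
  exact continuous_iff_continuousAt.mpr fun ρ ↦
    (hasDerivAt_gaussianExpectation_eval_pow _ n ρ).continuousAt

theorem hasDerivAt_gaussianExpectation_mehlerPath_pow {f : ℕ → MvPolynomial ι ℝ}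
    (hf : ∀ j, f j ∈ wienerChaos ι j) (k n : ℕ) {ρ : ℝ} (hρ : ρ ≠ 0) :
    HasDerivAt (fun t ↦ gaussianExpectation ι (mehlerPath f k t ^ (n + 2)))
      (ρ⁻¹ * ((n + 2) * ((n + 1) * ∑ i, gaussianExpectation ι
        (mehlerPath f k ρ ^ n * pderiv i (mehlerPath f k ρ) ^ 2)))) ρ := by
  rw [← gaussianExpectation_pow_mul_numberOperator, numberOperator_mehlerPath hf,
    mul_smul_comm, map_smul, smul_eq_mul, mul_left_comm _ ρ, inv_mul_cancel_left₀ hρ]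
  simp only [mehlerPath_eq_eval]
  exact_mod_cast hasDerivAt_gaussianExpectation_eval_pow _ (n + 2) ρ

theorem eval_pow_two_mul_nonneg {σ : Type*} (q : MvPolynomial σ ℝ) (n : ℕ) (z : σ → ℝ) :
    0 ≤ eval z (q ^ (2 * n)) := by
  simpa only [map_pow] using (even_two_mul n).pow_nonneg (eval z q)

theorem gaussianExpectation_pow_two_mul_nonneg (q : MvPolynomial ι ℝ) (n : ℕ) :
    0 ≤ gaussianExpectation ι (q ^ (2 * n)) :=
  integral_nonneg (eval_pow_two_mul_nonneg q n)

theorem gaussianExpectation_pow_mul_sq_le (n : ℕ) (g h : MvPolynomial ι ℝ) :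
    gaussianExpectation ι (g ^ (2 * n) * h ^ 2) ≤
      gaussianExpectation ι (g ^ (2 * (n + 1))) ^ (1 - ((n + 1 : ℕ) : ℝ)⁻¹) *
        gaussianExpectation ι (h ^ (2 * (n + 1))) ^ (((n + 1 : ℕ) : ℝ)⁻¹) := by
  have hθ : 1 - ((n + 1 : ℕ) : ℝ)⁻¹ = ((n + 1 : ℕ) : ℝ)⁻¹ * n := by
    field_simp
    push_cast
    ring
  have hsq {x : ℝ} : (x ^ (2 * (n + 1))) ^ (((n + 1 : ℕ) : ℝ)⁻¹) = x ^ 2 := by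
    rw [pow_mul, Real.pow_rpow_inv_natCast (sq_nonneg x) n.succ_ne_zero]
  have hpow {x : ℝ} : (x ^ (2 * (n + 1))) ^ (1 - ((n + 1 : ℕ) : ℝ)⁻¹) = x ^ (2 * n) := by
    rw [hθ, Real.rpow_mul_natCast ((even_two_mul _).pow_nonneg x), hsq, pow_mul]
  have hholder := integral_rpow_mul_rpow_le
    (integrable_eval_piStdGaussian (g ^ (2 * (n + 1))))
    (integrable_eval_piStdGaussian (h ^ (2 * (n + 1))))
    (eval_pow_two_mul_nonneg g _) (eval_pow_two_mul_nonneg h _)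
    (hθ ▸ by positivity) (by positivity) (sub_add_cancel 1 ((n + 1 : ℕ) : ℝ)⁻¹)
  simpa only [map_pow, hsq, hpow, gaussianExpectation_apply, map_mul] using hholder

theorem sum_gaussianExpectation_pow_mul_sq_pderiv_le {n k : ℕ} {M : ℝ}
    (hM : ∀ h : MvPolynomial ι ℝ, h.totalDegree ≤ k →
      gaussianExpectation ι (h ^ (2 * (n + 1))) ^ (((n + 1 : ℕ) : ℝ)⁻¹) ≤
        M * gaussianExpectation ι (h ^ 2))
    {g : MvPolynomial ι ℝ} (hg : g.totalDegree ≤ k + 1) :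
    ∑ i, gaussianExpectation ι (g ^ (2 * n) * pderiv i g ^ 2) ≤
      gaussianExpectation ι (g ^ (2 * (n + 1))) ^ (1 - ((n + 1 : ℕ) : ℝ)⁻¹) *
        (M * ∑ i, gaussianExpectation ι (pderiv i g ^ 2)) := by
  rw [Finset.mul_sum, Finset.mul_sum]
  refine Finset.sum_le_sum fun i _ ↦ (gaussianExpectation_pow_mul_sq_le n g _).trans ?_
  have hdeg : (pderiv i g).totalDegree ≤ k :=
    (totalDegree_pderiv_le i g).trans (Nat.sub_le_of_le_add hg)
  exact mul_le_mul_of_nonneg_left (hM _ hdeg)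
    (Real.rpow_nonneg (gaussianExpectation_pow_two_mul_nonneg _ _) _)

theorem rpow_gaussianExpectation_mehlerPath_sub_le {f : ℕ → MvPolynomial ι ℝ}
    (hf : ∀ j, f j ∈ wienerChaos ι j) {n k : ℕ} {M : ℝ} (hM0 : 0 ≤ M)
    (hM : ∀ h : MvPolynomial ι ℝ, h.totalDegree ≤ k →
      gaussianExpectation ι (h ^ (2 * (n + 1))) ^ (((n + 1 : ℕ) : ℝ)⁻¹) ≤
        M * gaussianExpectation ι (h ^ 2)) :
    gaussianExpectation ι (mehlerPath f (k + 1) 1 ^ (2 * (n + 1))) ^ (((n + 1 : ℕ) : ℝ)⁻¹) -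
        gaussianExpectation ι (mehlerPath f (k + 1) 0 ^ (2 * (n + 1))) ^
          (((n + 1 : ℕ) : ℝ)⁻¹) ≤
      (2 * n + 1) * M * gaussianExpectation ι (mehlerPath f (k + 1) 1 ^ 2) -
        (2 * n + 1) * M * gaussianExpectation ι (mehlerPath f (k + 1) 0 ^ 2) := by
  have hcont (m : ℕ) := continuous_gaussianExpectation_mehlerPath_pow f (k + 1) m
  have hderiv (m : ℕ) {ρ : ℝ} (hρ : ρ ∈ Set.Ioo 0 1) :=
    hasDerivAt_gaussianExpectation_mehlerPath_pow hf (k + 1) m hρ.1.ne'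
  have hdirichlet (ρ : ℝ) :
      0 ≤ ∑ i, gaussianExpectation ι (pderiv i (mehlerPath f (k + 1) ρ) ^ 2) :=
    Finset.sum_nonneg fun i _ ↦ gaussianExpectation_pow_two_mul_nonneg _ 1
  refine rpow_sub_rpow_le_of_deriv_le zero_le_one (by positivity) (Nat.cast_inv_le_one _)
    (hcont (2 * (n + 1))).continuousOn ((hcont 2).const_mul ((2 * n + 1) * M)).continuousOn
    (fun ρ hρ ↦ hderiv (2 * n) hρ) (fun ρ hρ ↦ (hderiv 0 hρ).const_mul _)
    (fun ρ _ ↦ gaussianExpectation_pow_two_mul_nonneg _ _) (fun ρ hρ ↦ ?_) fun ρ hρ ↦ ?_ <;>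
  simp only [pow_zero, one_mul] <;>
  have hρ0 : 0 < ρ := hρ.1
  · have := hdirichlet ρ
    positivity
  · have hsum := sum_gaussianExpectation_pow_mul_sq_pderiv_le hM
      (totalDegree_mehlerPath_le hf (k + 1) ρ)
    calc _ = 2 * (2 * n + 1) * ρ⁻¹ * ∑ i, gaussianExpectation ι
            (mehlerPath f (k + 1) ρ ^ (2 * n) * pderiv i (mehlerPath f (k + 1) ρ) ^ 2) := by
          push_cast
          field_simp
      _ ≤ _ := mul_le_mul_of_nonneg_left hsum (by positivity)
      _ = _ := by
          push_cast
          ring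

theorem rpow_gaussianExpectation_pow_two_mul_le (n : ℕ) {k : ℕ} {q : MvPolynomial ι ℝ}
    (hq : q.totalDegree ≤ k) :
    gaussianExpectation ι (q ^ (2 * (n + 1))) ^ (((n + 1 : ℕ) : ℝ)⁻¹) ≤
      (2 * n + 1) ^ k * gaussianExpectation ι (q ^ 2) := by
  have hconst (c : ℝ) :
      gaussianExpectation ι (C c ^ (2 * (n + 1))) ^ (((n + 1 : ℕ) : ℝ)⁻¹) = c ^ 2 := by
    rw [← map_pow, gaussianExpectation_C, pow_mul,
      Real.pow_rpow_inv_natCast (sq_nonneg c) n.succ_ne_zero]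
  induction k generalizing q with
  | zero =>
    rw [totalDegree_eq_zero_iff_eq_C.mp (Nat.le_zero.mp hq), hconst, ← map_pow,
      gaussianExpectation_C, pow_zero, one_mul]
  | succ k ih =>
    obtain ⟨f, hf, hsum⟩ := exists_sum_wienerChaos_eq hq
    obtain ⟨c, hc⟩ : ∃ c, f 0 = C c :=
      ⟨_, totalDegree_eq_zero_iff_eq_C.mp (Nat.le_zero.mp (mem_wienerChaos.mp (hf 0)).2)⟩
    have hpath := rpow_gaussianExpectation_mehlerPath_sub_le hf
      (M := (2 * n + 1 : ℝ) ^ k) (by positivity) fun h hh ↦ ih hh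
    rw [mehlerPath_one_right, mehlerPath_zero_right, hsum, hc, hconst, ← map_pow,
      gaussianExpectation_C, ← pow_succ'] at hpath
    have hconst_le : c ^ 2 ≤ (2 * n + 1) ^ (k + 1) * c ^ 2 :=
      le_mul_of_one_le_left (sq_nonneg c) (one_le_pow₀ (by linarith [n.cast_nonneg (α := ℝ)]))
    linarith

theorem rpow_integral_abs_eval_pow_two_mul_le (n : ℕ) {k : ℕ} {q : MvPolynomial ι ℝ}
    (hq : q.totalDegree ≤ k) :
    (∫ z, |eval z q| ^ (2 * (n + 1)) ∂piStdGaussian ι) ^ (((2 * (n + 1) : ℕ) : ℝ)⁻¹) ≤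
      √(2 * n + 1) ^ k * (∫ z, eval z q ^ 2 ∂piStdGaussian ι) ^ ((2 : ℝ)⁻¹) := by
  have hq0 := gaussianExpectation_pow_two_mul_nonneg q (n + 1)
  calc (∫ z, |eval z q| ^ (2 * (n + 1)) ∂piStdGaussian ι) ^ (((2 * (n + 1) : ℕ) : ℝ)⁻¹)
      = (gaussianExpectation ι (q ^ (2 * (n + 1))) ^ (((n + 1 : ℕ) : ℝ)⁻¹)) ^ (2 : ℝ)⁻¹ := by
        rw [← Real.rpow_mul hq0]
        simp only [(even_two_mul _).pow_abs, gaussianExpectation_apply,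
          map_pow, Nat.cast_mul, mul_inv_rev, Nat.cast_ofNat]
    _ ≤ ((2 * n + 1) ^ k * gaussianExpectation ι (q ^ 2)) ^ (2 : ℝ)⁻¹ := by
        gcongr
        exact rpow_gaussianExpectation_pow_two_mul_le n hq
    _ = √(2 * n + 1) ^ k * (∫ z, eval z q ^ 2 ∂piStdGaussian ι) ^ ((2 : ℝ)⁻¹) := by
        rw [Real.mul_rpow (by positivity) (gaussianExpectation_pow_two_mul_nonneg q 1),
          ← Real.rpow_pow_comm (by positivity), Real.sqrt_eq_rpow, one_div]
        simp only [gaussianExpectation_apply, map_pow]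

theorem exists_le_two_mul_succ_and_le_sub_one_sq {p : ℕ} (hp : 2 ≤ p) :
    ∃ n : ℕ, p ≤ 2 * (n + 1) ∧ (2 * n + 1 : ℝ) ≤ (p - 1) ^ 2 := by
  obtain ⟨n, rfl | rfl⟩ : ∃ n, p = 2 * n + 2 ∨ p = 2 * n + 3 := ⟨(p - 2) / 2, by omega⟩
  · refine ⟨n, by omega, ?_⟩
    push_cast
    nlinarith
  · refine ⟨n + 1, by omega, ?_⟩
    push_cast
    nlinarith

theorem gaussian_hypercontractivity_general {k : ℕ} {q : MvPolynomial ι ℝ} (hq : q.totalDegree ≤ k)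
    {p : ℕ} (hp : 2 ≤ p) :
    (∫ z, |eval z q| ^ p ∂piStdGaussian ι) ^ ((p : ℝ)⁻¹) ≤
      ((p : ℝ) - 1) ^ k * (∫ z, eval z q ^ 2 ∂piStdGaussian ι) ^ ((2 : ℝ)⁻¹) := by
  obtain ⟨n, hpn, hn⟩ := exists_le_two_mul_succ_and_le_sub_one_sq hp
  have hp1 : 0 ≤ (p : ℝ) - 1 := sub_nonneg.mpr (mod_cast (one_le_two.trans hp))
  calc (∫ z, |eval z q| ^ p ∂piStdGaussian ι) ^ ((p : ℝ)⁻¹)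
      ≤ (∫ z, |eval z q| ^ (2 * (n + 1)) ∂piStdGaussian ι) ^ (((2 * (n + 1) : ℕ) : ℝ)⁻¹) :=
        rpow_integral_norm_pow_le_of_le (by omega) hpn (memLp_eval_piStdGaussian q _)
    _ ≤ √(2 * n + 1) ^ k * (∫ z, eval z q ^ 2 ∂piStdGaussian ι) ^ ((2 : ℝ)⁻¹) :=
        rpow_integral_abs_eval_pow_two_mul_le n hq
    _ ≤ ((p : ℝ) - 1) ^ k * (∫ z, eval z q ^ 2 ∂piStdGaussian ι) ^ ((2 : ℝ)⁻¹) := by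
        gcongr
        exact Real.sqrt_le_iff.mpr ⟨hp1, hn⟩

end

/-- (Gaussian hypercontractivity) For any polynomial `q : ℝ^d → ℝ` of degree `k` and any
integer `p ≥ 2`, `‖q‖_{L^p(γ_d)} ≤ (p−1)^k ‖q‖_{L^2(γ_d)}`, where `γ_d` is the standard
Gaussian measure on `ℝ^d`. -/
theorem gaussian_hypercontractivity (d k : ℕ) (q : MvPolynomial (Fin d) ℝ)
    (hq : q.totalDegree ≤ k) (p : ℕ) (hp : 2 ≤ p) :
    (∫ z : Fin d → ℝ, |MvPolynomial.eval z q| ^ p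
        ∂(Measure.pi fun _ : Fin d => gaussianReal 0 1)) ^ ((p : ℝ)⁻¹) ≤
      ((p : ℝ) - 1) ^ k *
        (∫ z : Fin d → ℝ, (MvPolynomial.eval z q) ^ 2
            ∂(Measure.pi fun _ : Fin d => gaussianReal 0 1)) ^ ((2 : ℝ)⁻¹) :=
  gaussian_hypercontractivity_general hq hp
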